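/- Let n = 2m, let E₁, …, E_{2^m+1} be a spread of F₂ⁿ, let D be a set of 2^{m-1} of the indices, and let a ∈ F₂ⁿ. Define the partial spread function f : F₂ⁿ → {-1,1} by f(x) = -1 if x ⊕ a ∈ E_i \ {0} for some i ∈ D, and f(x) = 1 otherwise. Then the Fourier transform of f is given by: f̂(0ⁿ) = 2^{-m}, and for y ≠ 0ⁿ, f̂(y) = -(-1)^{⟨a,y⟩}·2^{-m} if y ∈ E_i^⊥ for some i ∈ D, and f̂(y) = (-1)^{⟨a,y⟩}·2^{-m} otherwise. In particular |f̂(y)| = 2^{-m} for all y, so f is a bent Boolean function. -/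

import Mathlib

/-- The standard bilinear form `⟨x,y⟩ = ∑ i, x i * y i` over `F₂`. -/
def innerF2 {n : ℕ} (x y : Fin n → ZMod 2) : ZMod 2 := ∑ i, x i * y i

/-- The character `(-1)^⟨x,y⟩` as a real number. -/
noncomputable def chiF2 {n : ℕ} (x y : Fin n → ZMod 2) : ℝ :=
  (-1 : ℝ) ^ (innerF2 x y).val

/-- The Fourier transform `f̂(y) = 2^{-n} ∑_x f(x) (-1)^{⟨x,y⟩}`. -/
noncomputable def fourierF2 {n : ℕ} (f : (Fin n → ZMod 2) → ℝ) (y : Fin n → ZMod 2) : ℝ :=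
  ((2 : ℝ) ^ n)⁻¹ * ∑ x, f x * chiF2 x y

/-- Orthogonal complement of a subspace of `F₂ⁿ` with respect to the standard
bilinear form. -/
def perpF2 {n : ℕ} (E : Submodule (ZMod 2) (Fin n → ZMod 2)) :
    Submodule (ZMod 2) (Fin n → ZMod 2) where
  carrier := {y | ∀ x ∈ E, ∑ i, x i * y i = 0}
  zero_mem' := by intro x hx; simp
  add_mem' := by
    intro y z hy hz x hx
    simp only [Pi.add_apply, mul_add, Finset.sum_add_distrib, hy x hx, hz x hx, add_zero]
  smul_mem' := by
    intro c y hy x hx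
    simp only [Pi.smul_apply, smul_eq_mul, mul_left_comm, ← Finset.mul_sum, hy x hx, mul_zero]

lemma zmod2_eq_one : ∀ u : ZMod 2, u ≠ 0 → u = 1 := by decide

lemma chiF2_add {n : ℕ} (x z y : Fin n → ZMod 2) :
    chiF2 (x + z) y = chiF2 x y * chiF2 z y := by
  have h : innerF2 (x + z) y = innerF2 x y + innerF2 z y := by
    simp [innerF2, add_mul, Finset.sum_add_distrib]
  have key : ∀ u v : ZMod 2,
      (-1 : ℝ) ^ (u + v).val = (-1 : ℝ) ^ u.val * (-1 : ℝ) ^ v.val := by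
    intro u v
    have h1 : (1 + 1 : ZMod 2) = 0 := rfl
    have hu : u = 0 ∨ u = 1 := by revert u; decide
    have hv : v = 0 ∨ v = 1 := by revert v; decide
    rcases hu with rfl | rfl <;> rcases hv with rfl | rfl <;> simp [h1, ZMod.val_one]
  unfold chiF2
  rw [h, key]

lemma chiF2_zero_right {n : ℕ} (x : Fin n → ZMod 2) : chiF2 x 0 = 1 := by
  simp [chiF2, innerF2]

lemma chiF2_zero_left {n : ℕ} (y : Fin n → ZMod 2) : chiF2 0 y = 1 := by
  simp [chiF2, innerF2]

open Classical in
lemma sum_chiF2 {n : ℕ} (E : Submodule (ZMod 2) (Fin n → ZMod 2)) (y : Fin n → ZMod 2) :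
    ∑ x, (if x ∈ E then (1 : ℝ) else 0) * chiF2 x y =
      if y ∈ perpF2 E then (2 : ℝ) ^ (Module.finrank (ZMod 2) E) else 0 := by
  split_ifs with hy
  · have h1 : ∀ x, (if x ∈ E then (1 : ℝ) else 0) * chiF2 x y = if x ∈ E then (1 : ℝ) else 0 := by
      intro x
      split_ifs with hx
      · have : innerF2 x y = 0 := hy x hx
        simp [chiF2, this]
      · simp
    simp_rw [h1]
    have hc : Nat.card E = 2 ^ (Module.finrank (ZMod 2) E) := by
      rw [Module.natCard_eq_pow_finrank (K := ZMod 2) (V := E)]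
      simp
    rw [Finset.sum_boole]
    have : (Finset.univ.filter (fun x => x ∈ E)).card = Nat.card E := by
      rw [Nat.card_eq_fintype_card]
      exact (Fintype.card_subtype (fun x => x ∈ E)).symm
    rw [this, hc]
    push_cast
    rfl
  · have : ∃ x0 ∈ E, innerF2 x0 y ≠ 0 := by
      by_contra! hcon
      exact hy hcon
    obtain ⟨x0, hx0, hne⟩ := this
    have h1 : innerF2 x0 y = 1 := by
      exact zmod2_eq_one _ hne
    have hchi : chiF2 x0 y = -1 := by simp [chiF2, h1, ZMod.val_one]
    have h2 : ∑ x, (if x ∈ E then (1 : ℝ) else 0) * chiF2 x y =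
        ∑ x, (if x + x0 ∈ E then (1 : ℝ) else 0) * chiF2 (x + x0) y :=
      (Equiv.sum_comp (Equiv.addRight x0)
        (fun x => (if x ∈ E then (1 : ℝ) else 0) * chiF2 x y)).symm
    have h3 : ∑ x, (if x + x0 ∈ E then (1 : ℝ) else 0) * chiF2 (x + x0) y =
        - ∑ x, (if x ∈ E then (1 : ℝ) else 0) * chiF2 x y := by
      rw [← Finset.sum_neg_distrib]
      refine Finset.sum_congr rfl fun x _ => ?_
      rw [chiF2_add, hchi, Submodule.add_mem_iff_left E hx0]
      ring
    linarith

lemma mem_perp_top {n : ℕ} (y : Fin n → ZMod 2) : y ∈ perpF2 ⊤ ↔ y = 0 := by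
  constructor
  · intro h
    funext i
    have := h (Pi.single i 1) trivial
    simpa [Pi.single_apply] using this
  · rintro rfl
    exact Submodule.zero_mem _

lemma mem_perp_bot {n : ℕ} (y : Fin n → ZMod 2) : y ∈ perpF2 ⊥ := by
  intro x hx
  rw [Submodule.mem_bot] at hx
  simp [hx]

lemma mem_perp_two {m : ℕ} (E F : Submodule (ZMod 2) (Fin (2 * m) → ZMod 2))
    (hE : Module.finrank (ZMod 2) E = m) (hF : Module.finrank (ZMod 2) F = m)
    (h : E ⊓ F = ⊥) (y : Fin (2 * m) → ZMod 2) (h1 : y ∈ perpF2 E) (h2 : y ∈ perpF2 F) :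
    y = 0 := by
  have hd := Submodule.finrank_sup_add_finrank_inf_eq E F
  rw [h, finrank_bot, hE, hF] at hd
  have ht : E ⊔ F = ⊤ := by
    apply Submodule.eq_top_of_finrank_eq
    rw [Module.finrank_fin_fun]
    omega
  rw [← mem_perp_top, ← ht]
  intro x hx
  obtain ⟨u, hu, v, hv, rfl⟩ := Submodule.mem_sup.1 hx
  have e1 := h1 u hu
  have e2 := h2 v hv
  simp only [Pi.add_apply, add_mul, Finset.sum_add_distrib, e1, e2, add_zero]

open Classical in
lemma spread_sum {m : ℕ}
    (E : Fin (2 ^ m + 1) → Submodule (ZMod 2) (Fin (2 * m) → ZMod 2))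
    (hdim : ∀ i, Module.finrank (ZMod 2) (E i) = m)
    (hint : ∀ i j, i ≠ j → E i ⊓ E j = ⊥)
    (D : Finset (Fin (2 ^ m + 1)))
    (a : Fin (2 * m) → ZMod 2)
    (f : (Fin (2 * m) → ZMod 2) → ℝ)
    (hfneg : ∀ x, (∃ i ∈ D, x + a ∈ E i) → x + a ≠ 0 → f x = -1)
    (hfpos : ∀ x, ¬((∃ i ∈ D, x + a ∈ E i) ∧ x + a ≠ 0) → f x = 1)
    (y : Fin (2 * m) → ZMod 2) :
    ∑ x, f x * chiF2 x y = chiF2 a y * ((if y = 0 then (2 : ℝ) ^ (2 * m) else 0)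
      - 2 * ∑ i ∈ D, (if y ∈ perpF2 (E i) then (2 : ℝ) ^ m else 0) + 2 * D.card) := by
  have haa : ∀ z : Fin (2 * m) → ZMod 2, z + a + a = z := by
    intro z
    funext i; simp [add_assoc, CharTwo.add_self_eq_zero]
  have hf : ∀ z, f (z + a) = (if z ∈ (⊤ : Submodule (ZMod 2) (Fin (2 * m) → ZMod 2)) then (1 : ℝ) else 0)
      - 2 * ∑ i ∈ D, (if z ∈ E i then (1 : ℝ) else 0)
      + 2 * D.card * (if z ∈ (⊥ : Submodule (ZMod 2) (Fin (2 * m) → ZMod 2)) then (1 : ℝ) else 0) := by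
    intro z
    by_cases hz : z = 0
    · subst hz
      rw [hfpos _ (by rw [haa]; simp)]
      simp
    · by_cases hex : ∃ i ∈ D, z ∈ E i
      · rw [hfneg _ (by rw [haa]; exact hex) (by rw [haa]; exact hz)]
        obtain ⟨i, hi, hzi⟩ := hex
        rw [Finset.sum_eq_single_of_mem i hi]
        · simp [hz, hzi]; norm_num
        · intro j _ hji
          rw [if_neg]
          intro hzj
          apply hz
          have : z ∈ E j ⊓ E i := ⟨hzj, hzi⟩
          rwa [hint j i hji, Submodule.mem_bot] at this
      · rw [hfpos _ (by rw [haa]; exact fun h => hex h.1)]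
        rw [Finset.sum_eq_zero]
        · simp [hz]
        · intro i hi
          rw [if_neg]
          exact fun h => hex ⟨i, hi, h⟩
  have h1 : ∑ x, f x * chiF2 x y = ∑ z, f (z + a) * chiF2 (z + a) y :=
    (Equiv.sum_comp (Equiv.addRight a) (fun x => f x * chiF2 x y)).symm
  rw [h1]
  have hT := sum_chiF2 (⊤ : Submodule (ZMod 2) (Fin (2 * m) → ZMod 2)) y
  have hB := sum_chiF2 (⊥ : Submodule (ZMod 2) (Fin (2 * m) → ZMod 2)) y
  have hE : ∀ i, _ := fun i => sum_chiF2 (E i) y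
  rw [finrank_top, Module.finrank_fin_fun] at hT
  simp only [mem_perp_top] at hT
  rw [if_pos (mem_perp_bot y), finrank_bot, pow_zero] at hB
  simp only [hdim] at hE
  rw [← hT]
  simp_rw [← hE]
  rw [Finset.sum_comm]
  have h2 : (2 * D.card : ℝ) = 2 * D.card *
      ∑ x, (if x ∈ (⊥ : Submodule (ZMod 2) (Fin (2 * m) → ZMod 2)) then (1 : ℝ) else 0) * chiF2 x y := by
    rw [hB, mul_one]
  rw [h2, Finset.mul_sum, Finset.mul_sum, ← Finset.sum_sub_distrib, ← Finset.sum_add_distrib,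
    Finset.mul_sum]
  refine Finset.sum_congr rfl fun z _ => ?_
  rw [hf, chiF2_add, ← Finset.sum_mul]
  ring

theorem partial_spread_function_is_bent {m : ℕ}
    (E : Fin (2 ^ m + 1) → Submodule (ZMod 2) (Fin (2 * m) → ZMod 2))
    (hdim : ∀ i, Module.finrank (ZMod 2) (E i) = m)
    (hint : ∀ i j, i ≠ j → E i ⊓ E j = ⊥)
    (D : Finset (Fin (2 ^ m + 1))) (hD : D.card = 2 ^ (m - 1))
    (a : Fin (2 * m) → ZMod 2)
    (f : (Fin (2 * m) → ZMod 2) → ℝ)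
    (hfneg : ∀ x, (∃ i ∈ D, x + a ∈ E i) → x + a ≠ 0 → f x = -1)
    (hfpos : ∀ x, ¬((∃ i ∈ D, x + a ∈ E i) ∧ x + a ≠ 0) → f x = 1) :
    fourierF2 f 0 = ((2 : ℝ) ^ m)⁻¹ ∧
    (∀ y, y ≠ 0 → (∃ i ∈ D, y ∈ perpF2 (E i)) →
      fourierF2 f y = -(-1 : ℝ) ^ (innerF2 a y).val * ((2 : ℝ) ^ m)⁻¹) ∧
    (∀ y, y ≠ 0 → ¬(∃ i ∈ D, y ∈ perpF2 (E i)) →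
      fourierF2 f y = (-1 : ℝ) ^ (innerF2 a y).val * ((2 : ℝ) ^ m)⁻¹) ∧
    (∀ y, |fourierF2 f y| = ((2 : ℝ) ^ m)⁻¹) := by
  classical
  have key := spread_sum E hdim hint D a f hfneg hfpos
  have hpos : (2 : ℝ) ^ m ≠ 0 := by positivity
  have h2m : (2 : ℝ) ^ (2 * m) = 2 ^ m * 2 ^ m := by rw [two_mul, pow_add]
  have hDc : m ≠ 0 → (2 : ℝ) * D.card = 2 ^ m := by
    intro hm
    obtain ⟨k, rfl⟩ := Nat.exists_eq_succ_of_ne_zero hm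
    rw [hD]
    simp [pow_succ, mul_comm]
  have hm0 : ∀ y : Fin (2 * m) → ZMod 2, y ≠ 0 → m ≠ 0 := by
    rintro y hy rfl
    exact hy (funext fun i => i.elim0)
  have A : fourierF2 f 0 = ((2 : ℝ) ^ m)⁻¹ := by
    unfold fourierF2
    rw [key 0, chiF2_zero_right, if_pos rfl]
    have : ∀ i ∈ D, (if (0 : Fin (2 * m) → ZMod 2) ∈ perpF2 (E i) then (2 : ℝ) ^ m else 0)
        = 2 ^ m := fun i _ => if_pos (Submodule.zero_mem _)
    rw [Finset.sum_congr rfl this, Finset.sum_const, nsmul_eq_mul, ← mul_assoc, h2m]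
    by_cases hm : m = 0
    · subst hm
      simp
    · have := hDc hm
      rw [this]
      field_simp
      linarith
  have B : ∀ y, y ≠ 0 → (∃ i ∈ D, y ∈ perpF2 (E i)) →
      fourierF2 f y = -(-1 : ℝ) ^ (innerF2 a y).val * ((2 : ℝ) ^ m)⁻¹ := by
    rintro y hy ⟨i, hi, hyi⟩
    unfold fourierF2
    rw [key y, if_neg hy, Finset.sum_eq_single_of_mem i hi, if_pos hyi, hDc (hm0 y hy), h2m]
    · change _ * (chiF2 a y * _) = - chiF2 a y * _
      field_simp
      ring
    · intro j _ hji
      exact if_neg fun hyj => hy (mem_perp_two _ _ (hdim j) (hdim i) (hint j i hji) y hyj hyi)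
  have C : ∀ y, y ≠ 0 → ¬(∃ i ∈ D, y ∈ perpF2 (E i)) →
      fourierF2 f y = (-1 : ℝ) ^ (innerF2 a y).val * ((2 : ℝ) ^ m)⁻¹ := by
    intro y hy hn
    unfold fourierF2
    rw [key y, if_neg hy, Finset.sum_eq_zero, hDc (hm0 y hy), h2m]
    · change _ * (chiF2 a y * _) = chiF2 a y * _
      field_simp
      ring
    · intro i hi
      exact if_neg fun h => hn ⟨i, hi, h⟩
  refine ⟨A, B, C, fun y => ?_⟩
  by_cases hy : y = 0
  · rw [hy, A, abs_of_pos (by positivity)]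
  · by_cases h : ∃ i ∈ D, y ∈ perpF2 (E i)
    · rw [B y hy h]
      simp [abs_mul, abs_pow]
    · rw [C y hy h]
      simp [abs_mul, abs_pow]
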